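/- arXiv:2303.12632 — 2 statements merged into one kernel-verified Lean document; each statement's English description precedes it below -/
import Mathlib

section
/- Let Δ > δ ≥ 1 be integers and let G be a finite simple graph with n vertices, m edges, maximum degree at most Δ, and minimum degree at least δ. If δ ≤ 2m/n ≤ 2Δδ/(Δ+δ), then irr(G) ≤ 2Δm − δΔn. -/
open Finset SimpleGraph

/-- The irregularity of a graph: `irr G = ∑_{uv ∈ E(G)} |d_G(u) - d_G(v)|`. -/
def irr {V : Type*} [Fintype V] (G : SimpleGraph V) [DecidableRel G.Adj] : ℤ :=
  ∑ e ∈ G.edgeFinset, Sym2.lift ⟨fun u v => |(G.degree u : ℤ) - (G.degree v : ℤ)|,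
    fun u v => by simp [abs_sub_comm]⟩ e

/-! Every degree is at least `δ`, so `|d(u) - d(v)| ≤ (d(u) - δ) + (d(v) - δ)` on each edge `uv`.
Summing over the edges, each vertex `v` is counted `d(v)` times, whence
`irr G ≤ ∑ v, d(v) (d(v) - δ) ≤ Δ ∑ v, (d(v) - δ) = Δ (2m - δn)`. -/

theorem sum_edgeFinset_sum_toFinset {V M : Type*} [Fintype V] [DecidableEq V] [AddCommMonoid M]
    (G : SimpleGraph V) [DecidableRel G.Adj] (f : V → M) :
    ∑ e ∈ G.edgeFinset, ∑ v ∈ e.toFinset, f v = ∑ v, G.degree v • f v := by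
  have mem_iff (e : Sym2 V) (v : V) :
      e ∈ G.edgeFinset ∧ v ∈ e.toFinset ↔ e ∈ G.incidenceFinset v ∧ v ∈ univ := by
    simp [incidenceSet]
  rw [sum_comm' mem_iff]
  simp only [sum_const, card_incidenceFinset_eq_degree]

theorem sum_degree_sub {V R : Type*} [Fintype V] [Ring R] (G : SimpleGraph V)
    [DecidableRel G.Adj] (c : R) :
    ∑ v, ((G.degree v : R) - c) = 2 * #G.edgeFinset - Fintype.card V * c := by
  have sum_degree : ∑ v, (G.degree v : R) = 2 * #G.edgeFinset :=
    mod_cast congrArg (Nat.cast : ℕ → R) G.sum_degrees_eq_twice_card_edges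
  rw [sum_sub_distrib, sum_degree, sum_const, card_univ, nsmul_eq_mul]

section OrderedRing

variable {V R : Type*} [Fintype V] [CommRing R] [LinearOrder R] [IsStrictOrderedRing R]
  (G : SimpleGraph V) [DecidableRel G.Adj]

theorem irr_le_sum_degree_mul_degree_sub {δ : R} (hmin : ∀ v, δ ≤ G.degree v) :
    (irr G : R) ≤ ∑ v, (G.degree v : R) * (G.degree v - δ) := by
  classical
  simp only [← nsmul_eq_mul]
  rw [← sum_edgeFinset_sum_toFinset, irr, Int.cast_sum]
  refine sum_le_sum fun e he => ?_
  induction e with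
  | h u v =>
    have hadj : G.Adj u v := by simpa only [mem_edgeFinset, mem_edgeSet] using he
    rw [Sym2.toFinset_mk_eq, sum_pair hadj.ne, Sym2.lift_mk]
    push_cast
    exact abs_sub_le_iff.2 ⟨by linarith [hmin v], by linarith [hmin u]⟩

theorem stmt_5_general {Δ δ : R} (hmax : ∀ v, (G.degree v : R) ≤ Δ)
    (hmin : ∀ v, δ ≤ G.degree v) :
    (irr G : R) ≤ 2 * Δ * #G.edgeFinset - δ * Δ * Fintype.card V :=
  calc (irr G : R)
    _ ≤ ∑ v, (G.degree v : R) * (G.degree v - δ) := irr_le_sum_degree_mul_degree_sub G hmin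
    _ ≤ ∑ v, Δ * ((G.degree v : R) - δ) :=
      sum_le_sum fun v _ => mul_le_mul_of_nonneg_right (hmax v) (sub_nonneg.2 (hmin v))
    _ = 2 * Δ * #G.edgeFinset - δ * Δ * Fintype.card V := by
      rw [← mul_sum, sum_degree_sub]
      ring

end OrderedRing

theorem stmt_5 {V : Type*} [Fintype V] [Nonempty V] (G : SimpleGraph V) [DecidableRel G.Adj]
    (Δ δ : ℕ) (hδ : 1 ≤ δ) (hδΔ : δ < Δ)
    (hmax : ∀ v : V, G.degree v ≤ Δ)
    (hmin : ∀ v : V, δ ≤ G.degree v)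
    (n : ℝ) (hn : n = (Fintype.card V : ℝ))
    (m : ℝ) (hm : m = (G.edgeFinset.card : ℝ))
    (h1 : (δ : ℝ) ≤ 2 * m / n)
    (h2 : 2 * m / n ≤ 2 * (Δ : ℝ) * δ / ((Δ : ℝ) + δ)) :
    (irr G : ℝ) ≤ 2 * (Δ : ℝ) * m - (δ : ℝ) * Δ * n := by
  subst hn hm
  exact stmt_5_general G (fun v => mod_cast hmax v) (fun v => mod_cast hmin v)
end

section
/- Let Δ > δ ≥ 0 be integers and let δ* ∈ {δ, ..., Δ} be an integer maximizing Δ(Δ−i)i/(Δ+i) over i ∈ {δ, ..., Δ}, and suppose δ* ≥ 1 and δ* < Δ. The complete bipartite graph K_{Δ,δ*}, which has n = Δ+δ* vertices, maximum degree Δ, and minimum degree δ* ≥ δ, satisfies irr(K_{Δ,δ*}) = (Δ(Δ−δ*)δ*/(Δ+δ*))·n, i.e., the bound of Proposition 1 holds with equality for K_{Δ,δ*}. -/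
open Finset SimpleGraph

instance {α β : Type*} : DecidableRel (completeBipartiteGraph α β).Adj := fun v w => by
  simp only [completeBipartiteGraph]; infer_instance

variable {V W : Type*} [Fintype V] [Fintype W]

theorem irr_eq_card_edgeFinset_mul_of_abs_degree_sub_eq
    {G : SimpleGraph V} [DecidableRel G.Adj] {c : ℤ}
    (h : ∀ u v, G.Adj u v → |(G.degree u : ℤ) - G.degree v| = c) :
    irr G = #G.edgeFinset * c := by
  rw [irr, ← nsmul_eq_mul]
  refine sum_eq_card_nsmul fun e he ↦ ?_
  induction e with
  | h u v => exact h u v (by simpa only [mem_edgeFinset, mem_edgeSet] using he)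

theorem degree_completeBipartiteGraph_inl (v : V) :
    (completeBipartiteGraph V W).degree (Sum.inl v) = Fintype.card W := by
  have neighbors_eq : (completeBipartiteGraph V W).neighborFinset (Sum.inl v) =
      univ.map Function.Embedding.inr := by
    ext (_ | _) <;> simp
  rw [← card_neighborFinset_eq_degree, neighbors_eq, card_map, card_univ]

theorem degree_completeBipartiteGraph_inr (w : W) :
    (completeBipartiteGraph V W).degree (Sum.inr w) = Fintype.card V := by
  have neighbors_eq : (completeBipartiteGraph V W).neighborFinset (Sum.inr w) =
      univ.map Function.Embedding.inl := by
    ext (_ | _) <;> simp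
  rw [← card_neighborFinset_eq_degree, neighbors_eq, card_map, card_univ]

theorem card_edgeFinset_completeBipartiteGraph :
    #(completeBipartiteGraph V W).edgeFinset = Fintype.card V * Fintype.card W := by
  rw [← Nat.cast_inj (R := ℕ∞), ← Set.encard_coe_eq_coe_finsetCard, coe_edgeFinset,
    encard_edgeSet_completeBipartiteGraph, ENat.card_eq_coe_fintype_card,
    ENat.card_eq_coe_fintype_card, Nat.cast_mul]

theorem irr_completeBipartiteGraph :
    irr (completeBipartiteGraph V W) =
      Fintype.card V * Fintype.card W * |(Fintype.card V : ℤ) - Fintype.card W| := by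
  rw [irr_eq_card_edgeFinset_mul_of_abs_degree_sub_eq
      (c := |(Fintype.card V : ℤ) - Fintype.card W|),
    card_edgeFinset_completeBipartiteGraph, Nat.cast_mul]
  rintro (v | v) (w | w) hvw
  · simp at hvw
  · rw [degree_completeBipartiteGraph_inl, degree_completeBipartiteGraph_inr, abs_sub_comm]
  · rw [degree_completeBipartiteGraph_inl, degree_completeBipartiteGraph_inr]
  · simp at hvw

theorem stmt_13_general (Δ δ δs n : ℕ) (hV : Fintype.card V = Δ) (hW : Fintype.card W = δs)
    (hδ : δ ≤ δs) (hΔ : δs ≤ Δ) (hδs : 1 ≤ δs) (hn : n = Δ + δs) :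
    Fintype.card (V ⊕ W) = n ∧
    (∀ v, (completeBipartiteGraph V W).degree v ≤ Δ) ∧
    (∃ v, (completeBipartiteGraph V W).degree v = Δ) ∧
    (∀ v, δ ≤ (completeBipartiteGraph V W).degree v) ∧
    (irr (completeBipartiteGraph V W) : ℝ) =
      (Δ : ℝ) * ((Δ : ℝ) - δs) * δs / ((Δ : ℝ) + δs) * n := by
  subst hV hW hn
  obtain ⟨w⟩ : Nonempty W := Fintype.card_pos_iff.mp hδs
  refine ⟨Fintype.card_sum, ?_, ⟨Sum.inr w, degree_completeBipartiteGraph_inr w⟩, ?_, ?_⟩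
  · rintro (v | w)
    · exact (degree_completeBipartiteGraph_inl v).trans_le hΔ
    · exact (degree_completeBipartiteGraph_inr w).le
  · rintro (v | w)
    · exact hδ.trans_eq (degree_completeBipartiteGraph_inl v).symm
    · exact (hδ.trans hΔ).trans_eq (degree_completeBipartiteGraph_inr w).symm
  · have hVW : (0 : ℤ) ≤ Fintype.card V - Fintype.card W := sub_nonneg.mpr (mod_cast hΔ)
    rw [irr_completeBipartiteGraph, abs_of_nonneg hVW]
    push_cast
    field_simp

theorem stmt_13 (Δ δ : ℕ) (hδΔ : δ < Δ)
    (δs : ℕ) (hδs₁ : δ ≤ δs) (hδs₂ : δs ≤ Δ)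
    (hδsmax : ∀ i : ℕ, δ ≤ i → i ≤ Δ →
      (Δ : ℝ) * ((Δ : ℝ) - i) * i / ((Δ : ℝ) + i) ≤
        (Δ : ℝ) * ((Δ : ℝ) - δs) * δs / ((Δ : ℝ) + δs))
    (hδs₃ : 1 ≤ δs) (hδs₄ : δs < Δ)
    (n : ℕ) (hn : n = Δ + δs) :
    Fintype.card (Fin Δ ⊕ Fin δs) = n ∧
    (∀ v, (completeBipartiteGraph (Fin Δ) (Fin δs)).degree v ≤ Δ) ∧
    (∃ v, (completeBipartiteGraph (Fin Δ) (Fin δs)).degree v = Δ) ∧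
    (∀ v, δ ≤ (completeBipartiteGraph (Fin Δ) (Fin δs)).degree v) ∧
    (irr (completeBipartiteGraph (Fin Δ) (Fin δs)) : ℝ) =
      (Δ : ℝ) * ((Δ : ℝ) - δs) * δs / ((Δ : ℝ) + δs) * n :=
  stmt_13_general Δ δ δs n (Fintype.card_fin Δ) (Fintype.card_fin δs) hδs₁ hδs₂ hδs₃ hn
end
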